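/- arXiv:2301.03735 — 2 statements merged into one kernel-verified Lean document; each statement's English description precedes it below -/
import Mathlib

section
/- If A₀ = {0}, then every weak multiplier of A is a K-linear map. -/
/-- A function `T : A → A` is a weak multiplier of `A` if
`x * T y = T x * y` for all `x, y`. -/
def IsWeakMultiplier {A : Type*} [Mul A] (T : A → A) : Prop :=
  ∀ x y : A, x * T y = T x * y

/-! The products `T x * z = x * T z` and `z * T x = T z * x` are linear in `x`, because `T` has been
moved onto `z`. Hence `T (a • x + b • y)` and `a • T x + b • T y` have the same products with every
`z` on either side, so their difference lies in `A₀`. -/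

/-- The two-sided annihilator `A₀ = Ann_l(A) ∩ Ann_r(A)`, as a bare set. Its triviality means
that an element of `A` is determined by its products with all elements on both sides. -/
def twoSidedAnnihilator (A : Type*) [Mul A] [Zero A] : Set A :=
  {a | (∀ x : A, a * x = 0) ∧ (∀ x : A, x * a = 0)}

theorem eq_of_twoSidedAnnihilator_eq_singleton_zero {A : Type*} [NonUnitalNonAssocRing A]
    (h : twoSidedAnnihilator A = {0}) {a b : A}
    (hleft : ∀ z, a * z = b * z) (hright : ∀ z, z * a = z * b) : a = b := by
  have hsub : a - b ∈ twoSidedAnnihilator A :=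
    ⟨fun z => by rw [sub_mul, hleft, sub_self], fun z => by rw [mul_sub, hright, sub_self]⟩
  rw [h] at hsub
  exact sub_eq_zero.mp hsub

namespace IsWeakMultiplier

section Products

variable {K A : Type*} [Mul A] {T : A → A}

theorem map_add_mul [Add A] [RightDistribClass A] (hT : IsWeakMultiplier T) (x y z : A) :
    T (x + y) * z = (T x + T y) * z :=
  calc
    T (x + y) * z = (x + y) * T z := (hT _ _).symm
    _ = x * T z + y * T z := add_mul _ _ _
    _ = T x * z + T y * z := by rw [hT x z, hT y z]
    _ = (T x + T y) * z := (add_mul _ _ _).symm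

theorem mul_map_add [Add A] [LeftDistribClass A] (hT : IsWeakMultiplier T) (x y z : A) :
    z * T (x + y) = z * (T x + T y) :=
  calc
    z * T (x + y) = T z * (x + y) := hT _ _
    _ = T z * x + T z * y := mul_add _ _ _
    _ = z * T x + z * T y := by rw [hT z x, hT z y]
    _ = z * (T x + T y) := (mul_add _ _ _).symm

theorem map_smul_mul [SMul K A] [IsScalarTower K A A] (hT : IsWeakMultiplier T)
    (c : K) (x z : A) : T (c • x) * z = (c • T x) * z :=
  calc
    T (c • x) * z = (c • x) * T z := (hT _ _).symm
    _ = c • (x * T z) := smul_mul_assoc _ _ _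
    _ = c • (T x * z) := by rw [hT x z]
    _ = (c • T x) * z := (smul_mul_assoc _ _ _).symm

theorem mul_map_smul [SMul K A] [SMulCommClass K A A] (hT : IsWeakMultiplier T)
    (c : K) (x z : A) : z * T (c • x) = z * (c • T x) :=
  calc
    z * T (c • x) = T z * (c • x) := hT _ _
    _ = c • (T z * x) := mul_smul_comm _ _ _
    _ = c • (z * T x) := by rw [hT z x]
    _ = z * (c • T x) := (mul_smul_comm _ _ _).symm

end Products

section TrivialAnnihilator

variable {K A : Type*} [NonUnitalNonAssocRing A] {T : A → A}

protected theorem map_add (hT : IsWeakMultiplier T) (h : twoSidedAnnihilator A = {0})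
    (x y : A) : T (x + y) = T x + T y :=
  eq_of_twoSidedAnnihilator_eq_singleton_zero h (hT.map_add_mul x y) (hT.mul_map_add x y)

protected theorem map_smul [SMul K A] [SMulCommClass K A A] [IsScalarTower K A A]
    (hT : IsWeakMultiplier T) (h : twoSidedAnnihilator A = {0}) (c : K) (x : A) :
    T (c • x) = c • T x :=
  eq_of_twoSidedAnnihilator_eq_singleton_zero h (hT.map_smul_mul c x) (hT.mul_map_smul c x)

end TrivialAnnihilator

end IsWeakMultiplier

theorem weakMultiplier_linear_of_ann_eq_bot_general
    {K A : Type*} [NonUnitalNonAssocRing A] [SMul K A]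
    [SMulCommClass K A A] [IsScalarTower K A A]
    (h : twoSidedAnnihilator A = {0}) (T : A → A) (hT : IsWeakMultiplier T)
    (a b : K) (x y : A) : T (a • x + b • y) = a • T x + b • T y := by
  rw [hT.map_add h, hT.map_smul h, hT.map_smul h]

theorem weakMultiplier_linear_of_ann_eq_bot
    {K A : Type*} [Field K] [NonUnitalNonAssocRing A] [Module K A]
    [SMulCommClass K A A] [IsScalarTower K A A]
    (h : {a : A | (∀ x : A, a * x = 0) ∧ (∀ x : A, x * a = 0)} = {0})
    (T : A → A) (hT : IsWeakMultiplier T) :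
    ∀ (a b : K) (x y : A), T (a • x + b • y) = a • T x + b • T y :=
  weakMultiplier_linear_of_ann_eq_bot_general h T hT
end

section
/- Let A be an associative algebra over K with a left identity e (e·x = x for all x ∈ A). Then every weak multiplier T of A equals the left multiplication l_{T(e)} by the element a = T(e), this element a is left central, and T is a K-linear multiplier of A. Moreover, for left central elements a, b ∈ A, one has l_a = l_b if and only if a − b ∈ Ann_l(A). -/
/-- A function `T : A → A` is a multiplier of `A` if
`x * T y = T (x * y) = T x * y` for all `x, y`. -/
def IsMultiplier {A : Type*} [Mul A] (T : A → A) : Prop :=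
  ∀ x y : A, x * T y = T (x * y) ∧ T (x * y) = T x * y

/-- An element `a` is left central if it commutes with every element up to right multiplication
by an arbitrary factor. These are the elements whose left multiplication is a weak multiplier,
see `isWeakMultiplier_mul_left_iff`. -/
def IsLeftCentral {A : Type*} [Mul A] (a : A) : Prop :=
  ∀ x y : A, x * a * y = a * x * y

section Semigroup

variable {A : Type*} [Semigroup A] {a : A}

theorem isWeakMultiplier_mul_left_iff : IsWeakMultiplier (a * ·) ↔ IsLeftCentral a := by
  simp only [IsWeakMultiplier, IsLeftCentral, mul_assoc]

theorem IsLeftCentral.isMultiplier_mul_left (ha : IsLeftCentral a) : IsMultiplier (a * ·) :=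
  fun x y =>
    have map_mul : a * (x * y) = a * x * y := (mul_assoc a x y).symm
    ⟨(isWeakMultiplier_mul_left_iff.mpr ha x y).trans map_mul.symm, map_mul⟩

end Semigroup

namespace IsWeakMultiplier

variable {A : Type*} {T : A → A} {e : A}

theorem apply_eq_mul [Mul A] (hT : IsWeakMultiplier T) (he : ∀ x, e * x = x) (x : A) :
    T x = T e * x :=
  calc
    T x = e * T x := (he (T x)).symm
    _ = T e * x := hT e x

theorem eq_mul_left [Mul A] (hT : IsWeakMultiplier T) (he : ∀ x, e * x = x) : T = (T e * ·) :=
  funext (hT.apply_eq_mul he)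

theorem isLeftCentral_apply [Semigroup A] (hT : IsWeakMultiplier T) (he : ∀ x, e * x = x) :
    IsLeftCentral (T e) :=
  isWeakMultiplier_mul_left_iff.mp (hT.eq_mul_left he ▸ hT)

theorem isMultiplier [Semigroup A] (hT : IsWeakMultiplier T) (he : ∀ x, e * x = x) :
    IsMultiplier T := by
  rw [hT.eq_mul_left he]
  exact (hT.isLeftCentral_apply he).isMultiplier_mul_left

theorem map_smul_add_smul {R : Type*} [Mul A] [Add A] [LeftDistribClass A] [SMul R A]
    [SMulCommClass R A A] (hT : IsWeakMultiplier T) (he : ∀ x, e * x = x) (c d : R) (x y : A) :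
    T (c • x + d • y) = c • T x + d • T y := by
  rw [hT.eq_mul_left he]
  simp only [mul_add, mul_smul_comm]

end IsWeakMultiplier

theorem forall_mul_eq_mul_iff_forall_sub_mul_eq_zero {A : Type*} [NonUnitalNonAssocRing A]
    {a b : A} : (∀ x, a * x = b * x) ↔ ∀ x, (a - b) * x = 0 := by
  simp only [sub_mul, sub_eq_zero]

theorem weakMultiplier_eq_mulLeft_of_left_identity_general
    {R A : Type*} [NonUnitalRing A] [SMul R A] [SMulCommClass R A A]
    (e : A) (he : ∀ x : A, e * x = x) :
    (∀ T : A → A, IsWeakMultiplier T →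
      (∀ x : A, T x = T e * x) ∧
      IsLeftCentral (T e) ∧
      IsMultiplier T ∧
      (∀ (c d : R) (x y : A), T (c • x + d • y) = c • T x + d • T y)) ∧
    (∀ a b : A, (∀ x : A, a * x = b * x) ↔ ∀ x : A, (a - b) * x = 0) :=
  ⟨fun _ hT => ⟨hT.apply_eq_mul he, hT.isLeftCentral_apply he, hT.isMultiplier he,
    hT.map_smul_add_smul he⟩, fun _ _ => forall_mul_eq_mul_iff_forall_sub_mul_eq_zero⟩

theorem weakMultiplier_eq_mulLeft_of_left_identity
    {K A : Type*} [Field K] [NonUnitalRing A] [Module K A]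
    [SMulCommClass K A A] [IsScalarTower K A A]
    (e : A) (he : ∀ x : A, e * x = x) :
    (∀ T : A → A, IsWeakMultiplier T →
      (∀ x : A, T x = T e * x) ∧
      (∀ x y : A, x * T e * y = T e * x * y) ∧
      IsMultiplier T ∧
      (∀ (a b : K) (x y : A), T (a • x + b • y) = a • T x + b • T y)) ∧
    (∀ a b : A, (∀ x y : A, x * a * y = a * x * y) →
      (∀ x y : A, x * b * y = b * x * y) →
      ((∀ x : A, a * x = b * x) ↔ ∀ x : A, (a - b) * x = 0)) :=
  have general := weakMultiplier_eq_mulLeft_of_left_identity_general (R := K) e he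
  ⟨general.1, fun a b _ _ => general.2 a b⟩
end
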